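/- Let A : ℝ^k → ℝ^ℓ be a linear map between finite-dimensional real inner product spaces, let w ∈ ℝ^k with ‖w‖ = 1, let K ⊆ ℝ^k be a bounded set, and let μ* ∈ K be a maximizer of μ ↦ ⟪w, μ⟫ over K. Let Q : ℝ^k → (ker A)^⊥ denote the orthogonal projection onto the orthogonal complement of ker A. Then for every μ ∈ K, ⟪Q(w), μ − μ*⟫ ≤ ρ(A; w) · diam K. -/

import Mathlib

open scoped RealInnerProductSpace

/-- The teaching risk of a worldview `A` with respect to reward weights `w`:
`ρ(A; w) = sup { ⟪w, v⟫ : v ∈ ker A, ‖v‖ ≤ 1 }`. -/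
noncomputable def teachingRisk {k : ℕ} {F : Type*} [AddCommGroup F] [Module ℝ F]
    (A : EuclideanSpace ℝ (Fin k) →ₗ[ℝ] F) (w : EuclideanSpace ℝ (Fin k)) : ℝ :=
  sSup {r : ℝ | ∃ v ∈ LinearMap.ker A, ‖v‖ ≤ 1 ∧ r = ⟪w, v⟫}

/-!
Split `w = P w + Q w` along `ker A` and its orthogonal complement. The supremum defining `ρ(A; w)`
is attained at the normalisation of `P w`, so `ρ(A; w) = ‖P w‖`. By optimality of `μ*`,
`⟪Q w, μ - μ*⟫ = ⟪w, μ - μ*⟫ - ⟪P w, μ - μ*⟫ ≤ -⟪P w, μ - μ*⟫`, and Cauchy–Schwarz bounds the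
right-hand side by `‖P w‖ * ‖μ - μ*‖`.
-/

section InnerProductSpace

variable {E : Type*} [NormedAddCommGroup E] [InnerProductSpace ℝ E]
  (U : Submodule ℝ E) [U.HasOrthogonalProjection]

theorem isGreatest_inner_norm_starProjection (w : E) :
    IsGreatest {r : ℝ | ∃ v ∈ U, ‖v‖ ≤ 1 ∧ r = ⟪w, v⟫} ‖U.starProjection w‖ := by
  set p := U.starProjection w
  have inner_left_eq : ∀ v ∈ U, ⟪w, v⟫ = ⟪p, v⟫ := fun v hv ↦
    (Submodule.inner_orthogonalProjectionOnto_eq_of_mem_right ⟨v, hv⟩ w).symm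
  constructor
  · have hp : p ∈ U := U.starProjection_apply_mem w
    -- Since `0⁻¹ = 0`, the maximizer `‖p‖⁻¹ • p` also works when `p = 0`.
    refine ⟨‖p‖⁻¹ • p, U.smul_mem _ hp,
      mem_closedBall_zero_iff.mp (inv_norm_smul_mem_unitClosedBall p), ?_⟩
    calc ‖p‖ = ‖p‖⁻¹ * (‖p‖ * ‖p‖) := by rw [← mul_assoc, inv_mul_mul_self]
      _ = ‖p‖⁻¹ * ⟪w, p⟫ := by rw [inner_left_eq p hp, real_inner_self_eq_norm_mul_norm]
      _ = ⟪w, ‖p‖⁻¹ • p⟫ := (real_inner_smul_right _ _ _).symm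
  · rintro _ ⟨v, hvU, hv, rfl⟩
    calc ⟪w, v⟫ = ⟪p, v⟫ := inner_left_eq v hvU
      _ ≤ ‖p‖ * ‖v‖ := real_inner_le_norm _ _
      _ ≤ ‖p‖ := mul_le_of_le_one_right (norm_nonneg _) hv

theorem inner_starProjection_orthogonal_le (w z : E) :
    ⟪Uᗮ.starProjection w, z⟫ ≤ ⟪w, z⟫ + ‖U.starProjection w‖ * ‖z‖ := by
  have cauchy_schwarz : -(‖U.starProjection w‖ * ‖z‖) ≤ ⟪U.starProjection w, z⟫ :=
    neg_le_of_abs_le (abs_real_inner_le_norm _ _)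
  rw [Submodule.starProjection_orthogonal_val, inner_sub_left]
  linarith

theorem inner_projection_diff_le_teachingRisk_mul_diam_general (w : E) {K : Set E}
    (hK : Bornology.IsBounded K) {μstar : E} (hμstar : μstar ∈ K)
    (hmax : ∀ μ ∈ K, ⟪w, μ⟫ ≤ ⟪w, μstar⟫) {μ : E} (hμ : μ ∈ K) :
    ⟪Uᗮ.starProjection w, μ - μstar⟫ ≤ ‖U.starProjection w‖ * Metric.diam K := by
  have optimality : ⟪w, μ - μstar⟫ ≤ 0 := by
    rw [inner_sub_right]
    exact sub_nonpos.mpr (hmax μ hμ)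
  have norm_sub_le_diam : ‖μ - μstar‖ ≤ Metric.diam K := by
    rw [← dist_eq_norm]
    exact Metric.dist_le_diam_of_mem hK hμ hμstar
  calc ⟪Uᗮ.starProjection w, μ - μstar⟫
      ≤ ⟪w, μ - μstar⟫ + ‖U.starProjection w‖ * ‖μ - μstar‖ :=
        inner_starProjection_orthogonal_le U w _
    _ ≤ ‖U.starProjection w‖ * ‖μ - μstar‖ := add_le_of_nonpos_left optimality
    _ ≤ ‖U.starProjection w‖ * Metric.diam K := by gcongr

end InnerProductSpace

theorem teachingRisk_eq_norm_starProjection {k : ℕ} {F : Type*} [AddCommGroup F] [Module ℝ F]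
    (A : EuclideanSpace ℝ (Fin k) →ₗ[ℝ] F) (w : EuclideanSpace ℝ (Fin k)) :
    teachingRisk A w = ‖(LinearMap.ker A).starProjection w‖ :=
  (isGreatest_inner_norm_starProjection (LinearMap.ker A) w).csSup_eq

theorem inner_projection_diff_le_teachingRisk_mul_diam {k l : ℕ}
    (A : EuclideanSpace ℝ (Fin k) →ₗ[ℝ] EuclideanSpace ℝ (Fin l))
    (w : EuclideanSpace ℝ (Fin k)) (hw : ‖w‖ = 1)
    (K : Set (EuclideanSpace ℝ (Fin k))) (hK : Bornology.IsBounded K)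
    (μstar : EuclideanSpace ℝ (Fin k)) (hμstar : μstar ∈ K)
    (hmax : ∀ μ ∈ K, ⟪w, μ⟫ ≤ ⟪w, μstar⟫) :
    ∀ μ ∈ K,
      ⟪(Submodule.orthogonalProjectionOnto (LinearMap.ker A)ᗮ w : EuclideanSpace ℝ (Fin k)), μ - μstar⟫ ≤
        teachingRisk A w * Metric.diam K := by
  rw [teachingRisk_eq_norm_starProjection]
  exact fun _ ↦ inner_projection_diff_le_teachingRisk_mul_diam_general _ w hK hμstar hmax
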